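/- Let n ≥ 2, let f : Γ₊ → ℝ be smooth, symmetric, strictly positive, strictly increasing in each argument, positively homogeneous of degree one, and inverse concave, and let 0 < α ≤ 1. Let κ ∈ Γ₊ have pairwise distinct coordinates ordered κ₁ < κ₂ < … < κₙ, set F = f(κ), ḟ^k = ∂f/∂κ_k(κ), f̈^{kl} = ∂²f/∂κ_k∂κ_l(κ). Let T = (T_{kl}) be any real symmetric n×n matrix satisfying the constraint Σ_{l=1}^n ḟ^l T_{ll} = (F/κ₁) T_{11}. Then Σ_{k,l} f̈^{kl} T_{kk} T_{ll} + 2 Σ_{k>l} ((ḟ^k − ḟ^l)/(κ_k − κ_l)) T_{kl}² − (α+1) F^{-1} (Σ_k ḟ^k T_{kk})² + (α+1) κ₁^{-1} Σ_{k=1}^n ḟ^k T_{1k}² + 2 Σ_{k=1}^n Σ_{l=2}^n (ḟ^k/(κ_l − κ₁)) T_{kl}² ≥ 0. -/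

import Mathlib

/-!
The curve `t ↦ (κ⁻¹ + t v)⁻¹` is a straight line in the variables of the dual function, so `1 / f`
is concave along it. The tangent inequality at `κ`, together with `f > 0`, bounds each `ḟ^k κ_k`
between `0` and `f κ`, and comparing `κ` with a transposition of itself (where `f` takes the same
value) shows that `ḟ^k κ_k²` increases with `κ_k`. The second-order condition at `κ` bounds the
Hessian term from below by `2 F⁻¹ (∑ ḟ^k T_kk)² - 2 ∑ (ḟ^k / κ_k) T_kk²`.

The gradient terms compensate the last sum, except at `k = 1`, since `1 / (κ_l - κ₁) ≥ 1 / κ_l`;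
off the diagonal they dominate the divided differences by the monotonicity of `ḟ^k κ_k²`. By the
constraint on `T`, what remains is at least `(1 - α) (F - ḟ^1 κ₁) (T₁₁ / κ₁)² ≥ 0`.
-/

open Filter Topology Matrix

noncomputable section

/-- The open positive cone Γ₊ ⊂ ℝⁿ. -/
def posCone (n : ℕ) : Set (Fin n → ℝ) := {x | ∀ i, 0 < x i}

/-- The dual function f_*(x) = f(x₁⁻¹,…,xₙ⁻¹)⁻¹. -/
def dualF (n : ℕ) (f : (Fin n → ℝ) → ℝ) : (Fin n → ℝ) → ℝ :=
  fun x => (f fun i => (x i)⁻¹)⁻¹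

/-- First partial derivative ḟ^i(x) = ∂f/∂x_i(x). -/
def D1 (n : ℕ) (f : (Fin n → ℝ) → ℝ) (x : Fin n → ℝ) (i : Fin n) : ℝ :=
  fderiv ℝ f x (Pi.single i 1)

/-- Second partial derivative f̈^{ij}(x) = ∂²f/∂x_i∂x_j(x). -/
def D2 (n : ℕ) (f : (Fin n → ℝ) → ℝ) (x : Fin n → ℝ) (i j : Fin n) : ℝ :=
  fderiv ℝ (fun y => fderiv ℝ f y (Pi.single i 1)) x (Pi.single j 1)

section Algebra

section Field

variable {𝕜 : Type*} [Field 𝕜] [LinearOrder 𝕜] [IsStrictOrderedRing 𝕜]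

lemma divided_difference_add_div_add_div_nonneg {a b x y : 𝕜} (hx : 0 < x) (hxy : x < y)
    (h : a * x ^ 2 ≤ b * y ^ 2) : 0 ≤ (b - a) / (y - x) + b / x + a / y := by
  have hy : 0 < y := hx.trans hxy
  have hd : 0 < y - x := sub_pos.2 hxy
  have heq : (b - a) / (y - x) + b / x + a / y = (b * y ^ 2 - a * x ^ 2) / (y * x * (y - x)) := by
    field_simp
    ring
  rw [heq]
  exact div_nonneg (sub_nonneg.2 h) (mul_pos (mul_pos hy hx) hd).le

lemma mem_Icc_of_neg_lt_mul_sub_one {c M : 𝕜} (hM : 0 < M) (h : ∀ r, 0 < r → -M < c * (r - 1)) :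
    c ∈ Set.Icc 0 M := by
  by_contra hc
  rw [Set.mem_Icc, not_and_or, not_le, not_le] at hc
  have hc₀ : c ≠ 0 := hc.elim ne_of_lt fun hMc => (hM.trans hMc).ne'
  have hratio : M / c < 1 := by
    obtain hneg | hMc := hc
    · exact (div_neg_of_pos_of_neg hM hneg).trans one_pos
    · exact (div_lt_one (hM.trans hMc)).2 hMc
  have hlt := h (1 - M / c) (sub_pos.2 hratio)
  rw [sub_sub_cancel_left, mul_neg, mul_div_cancel₀ _ hc₀] at hlt
  exact lt_irrefl _ hlt

end Field

lemma sum_sum_eq_sum_diag_add_sum_lt {ι M : Type*} [Fintype ι] [LinearOrder ι] [AddCommMonoid M]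
    (G : ι → ι → M) :
    ∑ k, ∑ l, G k l = ∑ k, G k k + ∑ k, ∑ l with l < k, (G k l + G l k) := by
  have hsplit : ∀ k, ∑ l, G k l = G k k + ∑ l with l < k, G k l + ∑ l with k < l, G k l := by
    intro k
    simp only [Finset.sum_filter, ← Fintype.sum_ite_eq k, ← Finset.sum_add_distrib]
    refine Finset.sum_congr rfl fun l _ => ?_
    obtain h | rfl | h := lt_trichotomy k l <;> simp [*, LT.lt.not_gt, LT.lt.ne, LT.lt.ne']
  have hswap : ∑ k, ∑ l with k < l, G k l = ∑ k, ∑ l with l < k, G l k :=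
    Finset.sum_comm' (by simp)
  simp only [hsplit, Finset.sum_add_distrib, hswap, add_assoc]

variable {n : ℕ} [NeZero n] {a κ : Fin n → ℝ} (hκ : κ ∈ posCone n) (hκmono : StrictMono κ)
include hκ hκmono

lemma div_le_div_sub_apply_zero {c : ℝ} (hc : 0 ≤ c) {l : Fin n} (hl : l ≠ 0) :
    c / κ l ≤ c / (κ l - κ 0) :=
  div_le_div_of_nonneg_left hc (sub_pos.2 (hκmono (Fin.pos_iff_ne_zero.2 hl)))
    (sub_le_self _ (hκ 0).le)

lemma offDiag_coeff_nonneg (ha : ∀ k, 0 ≤ a k) {k l : Fin n} (hlk : l < k)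
    (hsq : a l * κ l ^ 2 ≤ a k * κ k ^ 2) :
    0 ≤ (a k - a l) / (κ k - κ l) + a k / (κ l - κ 0) + a l / (κ k - κ 0) := by
  have hk : k ≠ 0 := hlk.ne_zero
  obtain rfl | hl := eq_or_ne l 0
  · have heq : (a k - a 0) / (κ k - κ 0) + a k / (κ 0 - κ 0) + a 0 / (κ k - κ 0)
        = a k / (κ k - κ 0) := by
      rw [sub_self, div_zero]
      ring
    rw [heq]
    exact div_nonneg (ha k) (sub_pos.2 (hκmono hlk)).le
  · calc
      0 ≤ (a k - a l) / (κ k - κ l) + a k / κ l + a l / κ k :=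
        divided_difference_add_div_add_div_nonneg (hκ l) (hκmono hlk) hsq
      _ ≤ _ := by
        gcongr ?_ + ?_ + ?_
        · exact le_rfl
        · exact div_le_div_sub_apply_zero hκ hκmono (ha k) hl
        · exact div_le_div_sub_apply_zero hκ hκmono (ha l) hk

lemma sum_div_mul_sq_le_divided_differences_add_gradient (ha : ∀ k, 0 ≤ a k)
    (hsq : ∀ l k, l < k → a l * κ l ^ 2 ≤ a k * κ k ^ 2)
    {T : Matrix (Fin n) (Fin n) ℝ} (hT : T.IsSymm) :
    ∑ k, a k / κ k * T k k ^ 2 - a 0 / κ 0 * T 0 0 ^ 2 ≤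
      ∑ k, ∑ l with l < k, (a k - a l) / (κ k - κ l) * T k l ^ 2
        + ∑ k, ∑ l with l ≠ 0, a k / (κ l - κ 0) * T k l ^ 2 := by
  -- The terms with `l = 0` have denominator `κ 0 - κ 0`, so they are zero.
  have hfull : ∑ k, ∑ l with l ≠ 0, a k / (κ l - κ 0) * T k l ^ 2
      = ∑ k, ∑ l, a k / (κ l - κ 0) * T k l ^ 2 :=
    Finset.sum_congr rfl fun k _ => Finset.sum_filter_of_ne fun l _ => by
      contrapose!
      rintro rfl
      simp
  have hdiag : ∑ k, a k / κ k * T k k ^ 2 - a 0 / κ 0 * T 0 0 ^ 2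
      ≤ ∑ k, a k / (κ k - κ 0) * T k k ^ 2 := by
    rw [Fintype.sum_eq_add_sum_compl 0, Fintype.sum_eq_add_sum_compl 0, sub_self, div_zero,
      zero_mul, zero_add, add_sub_cancel_left]
    refine Finset.sum_le_sum fun k hk => mul_le_mul_of_nonneg_right ?_ (sq_nonneg _)
    exact div_le_div_sub_apply_zero hκ hκmono (ha k) (by simpa using hk)
  have hoff : 0 ≤ ∑ k, ∑ l with l < k, (a k - a l) / (κ k - κ l) * T k l ^ 2
      + ∑ k, ∑ l with l < k,
        (a k / (κ l - κ 0) * T k l ^ 2 + a l / (κ k - κ 0) * T l k ^ 2) := by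
    simp only [← Finset.sum_add_distrib]
    refine Finset.sum_nonneg fun k _ => Finset.sum_nonneg fun l hl => ?_
    have hlk : l < k := (Finset.mem_filter.1 hl).2
    rw [hT.apply k l, ← add_mul, ← add_mul, ← add_assoc]
    exact mul_nonneg (offDiag_coeff_nonneg hκ hκmono ha hlk (hsq l k hlk)) (sq_nonneg _)
  rw [hfull, sum_sum_eq_sum_diag_add_sum_lt fun k l => a k / (κ l - κ 0) * T k l ^ 2]
  linarith

end Algebra

section OneVariable

lemma two_mul_sq_le_mul_of_concaveOn_inv {s : Set ℝ} (hs : IsOpen s) {φ φ' : ℝ → ℝ} {t φ'' : ℝ}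
    (ht : t ∈ s) (hpos : ∀ x ∈ s, 0 < φ x) (hconc : ConcaveOn ℝ s fun x => (φ x)⁻¹)
    (hφ : ∀ x ∈ s, HasDerivAt φ (φ' x) x) (hφ' : HasDerivAt φ' φ'' t) :
    2 * φ' t ^ 2 ≤ φ t * φ'' := by
  have hinv : ∀ x ∈ s, HasDerivAt (fun x => (φ x)⁻¹) (-φ' x / φ x ^ 2) x := fun x hx =>
    (hφ x hx).fun_inv (hpos x hx).ne'
  have hpt : 0 < φ t := hpos t ht
  have hsecond : HasDerivAt (deriv fun x => (φ x)⁻¹)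
      ((2 * φ' t ^ 2 - φ t * φ'') / φ t ^ 3) t := by
    have hquot := hφ'.fun_neg.fun_div ((hφ t ht).fun_pow 2) (by positivity)
    refine (hquot.congr_of_eventuallyEq ?_).congr_deriv ?_
    · filter_upwards [hs.mem_nhds ht] with x hx using (hinv x hx).deriv
    · field_simp
      ring
  have hanti := hconc.antitoneOn_deriv fun x hx => (hinv x hx).differentiableAt
  have hle := hanti.derivWithin_nonpos (x := t)
  rw [derivWithin_of_isOpen hs ht, hsecond.deriv, div_le_iff₀ (by positivity), zero_mul] at hle
  exact sub_nonpos.1 hle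

end OneVariable

section Derivatives

variable {n : ℕ} {f : (Fin n → ℝ) → ℝ}

lemma isOpen_posCone (n : ℕ) : IsOpen (posCone n) := by
  simpa only [posCone, Set.pi, Set.mem_univ, true_imp_iff, Set.mem_Ioi] using
    isOpen_set_pi Set.finite_univ fun (_ : Fin n) _ => isOpen_Ioi (a := (0 : ℝ))

lemma fderiv_apply_eq_sum_D1 (f : (Fin n → ℝ) → ℝ) (x v : Fin n → ℝ) :
    fderiv ℝ f x v = ∑ i, D1 n f x i * v i := by
  conv_lhs => rw [pi_eq_sum_univ' v]
  simp only [map_sum, map_smul, smul_eq_mul, D1, mul_comm]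

lemma hasDerivAt_comp_curve {c : ℝ → Fin n → ℝ} {c' : Fin n → ℝ} {t : ℝ}
    (hf : DifferentiableAt ℝ f (c t)) (hc : HasDerivAt c c' t) :
    HasDerivAt (fun s => f (c s)) (∑ i, D1 n f (c t) i * c' i) t :=
  fderiv_apply_eq_sum_D1 f (c t) c' ▸ hf.hasFDerivAt.comp_hasDerivAt t hc

lemma differentiableAt_D1 {x : Fin n → ℝ} (hf : ContDiffAt ℝ 2 f x) (i : Fin n) :
    DifferentiableAt ℝ (fun y => D1 n f y i) x :=
  ((hf.fderiv_right (m := 1) le_rfl).differentiableAt one_ne_zero).clm_apply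
    (differentiableAt_const _)

lemma hasDerivAt_sum_D1_mul {c c' : ℝ → Fin n → ℝ} {c'' : Fin n → ℝ} {t : ℝ}
    (hf : ContDiffAt ℝ 2 f (c t)) (hc : HasDerivAt c (c' t) t) (hc' : HasDerivAt c' c'' t) :
    HasDerivAt (fun s => ∑ k, D1 n f (c s) k * c' s k)
      (∑ k, ∑ l, D2 n f (c t) k l * c' t k * c' t l + ∑ k, D1 n f (c t) k * c'' k) t := by
  rw [← Finset.sum_add_distrib]
  refine HasDerivAt.fun_sum fun k _ => ?_
  have hD1 : HasDerivAt (fun s => D1 n f (c s) k) (∑ l, D2 n f (c t) k l * c' t l) t :=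
    hasDerivAt_comp_curve (differentiableAt_D1 hf k) hc
  refine (hD1.fun_mul (hasDerivAt_pi.1 hc' k)).congr_deriv ?_
  simp only [Finset.sum_mul, mul_right_comm]

/-- The curve through `x` that coordinatewise inversion maps to a straight line with direction `v`;
along it, `f` is the reciprocal of the restriction of `dualF n f` to that line. -/
def invLine (x v : Fin n → ℝ) (t : ℝ) : Fin n → ℝ := (x⁻¹ + t • v)⁻¹

@[simp]
lemma invLine_zero (x v : Fin n → ℝ) : invLine x v 0 = x := by
  simp [invLine]

@[simp]
lemma invLine_inv_sub_inv_one (x y : Fin n → ℝ) : invLine x (y⁻¹ - x⁻¹) 1 = y := by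
  simp [invLine]

lemma invLine_mem_posCone {x v : Fin n → ℝ} {t : ℝ} :
    invLine x v t ∈ posCone n ↔ x⁻¹ + t • v ∈ posCone n := by
  simp [invLine, posCone]

lemma hasDerivAt_invLine {x v : Fin n → ℝ} {t : ℝ} (ht : invLine x v t ∈ posCone n) :
    HasDerivAt (invLine x v) (-v * invLine x v t ^ 2) t := by
  refine hasDerivAt_pi.2 fun i => ?_
  have hline : HasDerivAt (fun s : ℝ => (x i)⁻¹ + s * v i) (v i) t := by
    simpa using ((hasDerivAt_id t).mul_const (v i)).const_add (x i)⁻¹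
  refine (hline.fun_inv (invLine_mem_posCone.1 ht i).ne').congr_deriv ?_
  simp [invLine, div_eq_mul_inv]

lemma hasDerivAt_neg_mul_invLine_sq {x v : Fin n → ℝ} {t : ℝ} (ht : invLine x v t ∈ posCone n) :
    HasDerivAt (fun s => -v * invLine x v s ^ 2) (2 * v ^ 2 * invLine x v t ^ 3) t := by
  refine (((hasDerivAt_invLine ht).fun_pow 2).const_mul (-v)).congr_deriv ?_
  push_cast
  ring

lemma isOpen_setOf_invLine_mem_posCone (x v : Fin n → ℝ) :
    IsOpen {t | invLine x v t ∈ posCone n} := by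
  simp only [invLine_mem_posCone]
  exact (isOpen_posCone n).preimage (by fun_prop)

lemma concaveOn_inv_comp_invLine (hconc : ConcaveOn ℝ (posCone n) (dualF n f))
    (x v : Fin n → ℝ) :
    ConcaveOn ℝ {t | invLine x v t ∈ posCone n} fun t => (f (invLine x v t))⁻¹ := by
  have hline : ∀ t : ℝ, AffineMap.lineMap x⁻¹ (x⁻¹ + v) t = x⁻¹ + t • v := fun t => by
    rw [AffineMap.lineMap_apply_module', add_sub_cancel_left, add_comm]
  have hcomp := hconc.comp_affineMap (AffineMap.lineMap x⁻¹ (x⁻¹ + v) : ℝ →ᵃ[ℝ] Fin n → ℝ)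
  simp only [Function.comp_def, Set.preimage, hline, ← invLine_mem_posCone] at hcomp
  exact hcomp

end Derivatives

section InverseConcave

variable {n : ℕ} {f : (Fin n → ℝ) → ℝ} (hconc : ConcaveOn ℝ (posCone n) (dualF n f))
  {x : Fin n → ℝ} (hx : x ∈ posCone n)
include hconc hx

lemma sq_div_sub_le_sum_D1_mul (hf : DifferentiableAt ℝ f x) (hfx : f x ≠ 0) {y : Fin n → ℝ}
    (hy : y ∈ posCone n) :
    f x ^ 2 / f y - f x ≤ ∑ i, D1 n f x i * (x i ^ 2 * ((y i)⁻¹ - (x i)⁻¹)) := by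
  set v : Fin n → ℝ := y⁻¹ - x⁻¹
  have hderiv : HasDerivAt (fun t => f (invLine x v t))
      (-∑ i, D1 n f x i * (x i ^ 2 * ((y i)⁻¹ - (x i)⁻¹))) 0 := by
    refine (hasDerivAt_comp_curve (by rwa [invLine_zero])
      (hasDerivAt_invLine (by rwa [invLine_zero]))).congr_deriv ?_
    simp only [invLine_zero, ← Finset.sum_neg_distrib]
    exact Finset.sum_congr rfl fun i _ => by
      simp only [neg_sub, Pi.mul_apply, Pi.sub_apply, Pi.inv_apply, Pi.pow_apply, v]
      ring
  have hslope := (concaveOn_inv_comp_invLine hconc x v).slope_le_of_hasDerivAt (x := 0) (y := 1)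
    (by simpa using hx) (by simpa [v] using hy) one_pos
    (hderiv.fun_inv (by simpa using hfx))
  simp only [slope_def_field, invLine_zero, v, invLine_inv_sub_inv_one, neg_neg, sub_zero,
    div_one, le_div_iff₀ (sq_pos_of_ne_zero hfx)] at hslope
  calc
    f x ^ 2 / f y - f x = ((f y)⁻¹ - (f x)⁻¹) * f x ^ 2 := by field_simp
    _ ≤ _ := hslope

lemma D1_mul_self_mem_Icc (hf : DifferentiableAt ℝ f x) (hpos : ∀ x ∈ posCone n, 0 < f x)
    (k : Fin n) :
    D1 n f x k * x k ∈ Set.Icc 0 (f x) := by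
  have hfx : 0 < f x := hpos x hx
  -- Compare `x` with the point obtained by dividing its `k`-th coordinate by `r`.
  have hscale : ∀ r : ℝ, 0 < r → -f x < D1 n f x k * x k * (r - 1) := by
    intro r hr
    set y : Fin n → ℝ := (Function.update x⁻¹ k (r * (x k)⁻¹))⁻¹
    have hy : y ∈ posCone n := fun i => by
      obtain rfl | hik := eq_or_ne i k
      · simpa [y, hr] using hx i
      · simpa [y, hik] using hx i
    have hsum : ∑ i, D1 n f x i * (x i ^ 2 * ((y i)⁻¹ - (x i)⁻¹))
        = D1 n f x k * x k * (r - 1) := by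
      rw [Fintype.sum_eq_single k fun i hik => by simp [y, hik]]
      have hxk : x k ≠ 0 := (hx k).ne'
      simp only [Pi.inv_apply, Function.update_self, _root_.mul_inv_rev, inv_inv, y]
      field_simp
    rw [← hsum]
    calc
      -f x < f x ^ 2 / f y - f x := by linarith [div_pos (pow_pos hfx 2) (hpos y hy)]
      _ ≤ _ := sq_div_sub_le_sum_D1_mul hconc hx hf hfx.ne' hy
  exact mem_Icc_of_neg_lt_mul_sub_one hfx hscale

lemma D1_mul_sq_le_D1_mul_sq (hf : DifferentiableAt ℝ f x) (hfx : f x ≠ 0)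
    (hsym : ∀ σ : Equiv.Perm (Fin n), ∀ x ∈ posCone n, f (x ∘ σ) = f x)
    {k l : Fin n} (hlk : x l < x k) :
    D1 n f x l * x l ^ 2 ≤ D1 n f x k * x k ^ 2 := by
  have hne : k ≠ l := fun h => hlk.ne' (congrArg x h)
  have hsum : ∑ i, D1 n f x i * (x i ^ 2 * (((x ∘ Equiv.swap k l) i)⁻¹ - (x i)⁻¹))
      = (D1 n f x k * x k ^ 2 - D1 n f x l * x l ^ 2) * ((x l)⁻¹ - (x k)⁻¹) := by
    rw [Fintype.sum_eq_add k l hne fun i hi => by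
      simp [Equiv.swap_apply_of_ne_of_ne hi.1 hi.2]]
    simp only [Function.comp_apply, Equiv.swap_apply_left, Equiv.swap_apply_right]
    ring
  have htangent := sq_div_sub_le_sum_D1_mul hconc hx hf hfx
    (y := x ∘ Equiv.swap k l) fun i => hx (Equiv.swap k l i)
  rw [hsym _ x hx, sq, mul_self_div_self, sub_self, hsum] at htangent
  exact sub_nonneg.1 (nonneg_of_mul_nonneg_left htangent
    (sub_pos.2 (inv_strictAnti₀ (hx l) hlk)))

lemma two_mul_inv_mul_sum_D1_sq_le (hpos : ∀ x ∈ posCone n, 0 < f x)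
    (hf : ContDiffOn ℝ 2 f (posCone n)) (y : Fin n → ℝ) :
    2 * (f x)⁻¹ * (∑ k, D1 n f x k * y k) ^ 2 ≤
      ∑ k, ∑ l, D2 n f x k l * y k * y l + 2 * ∑ k, D1 n f x k / x k * y k ^ 2 := by
  have hfx : 0 < f x := hpos x hx
  have hx₀ : ∀ k, x k ≠ 0 := fun k => (hx k).ne'
  -- The direction for which the curve has velocity `y` at `t = 0`.
  set v : Fin n → ℝ := -y / x ^ 2
  have hvelocity : -v * x ^ 2 = y := by
    ext k
    simp [v, hx₀]
  have hacceleration : 2 * v ^ 2 * x ^ 3 = 2 * (y ^ 2 / x) := by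
    ext k
    have := hx₀ k
    simp only [Pi.mul_apply, Pi.ofNat_apply, Pi.pow_apply, Pi.div_apply, Pi.neg_apply, v]
    field_simp
  have h₀ : invLine x v 0 ∈ posCone n := by rwa [invLine_zero]
  have hcont : ∀ z ∈ posCone n, ContDiffAt ℝ 2 f z := fun z hz =>
    hf.contDiffAt ((isOpen_posCone n).mem_nhds hz)
  have hmain := two_mul_sq_le_mul_of_concaveOn_inv (isOpen_setOf_invLine_mem_posCone x v) h₀
    (fun _ ht => hpos _ ht) (concaveOn_inv_comp_invLine hconc x v)
    (fun _ ht => hasDerivAt_comp_curve ((hcont _ ht).differentiableAt two_ne_zero)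
      (hasDerivAt_invLine ht))
    (hasDerivAt_sum_D1_mul (c' := fun t => -v * invLine x v t ^ 2) (hcont _ h₀)
      (hasDerivAt_invLine h₀) (hasDerivAt_neg_mul_invLine_sq h₀))
  simp only [invLine_zero, hvelocity, hacceleration] at hmain
  calc
    2 * (f x)⁻¹ * (∑ k, D1 n f x k * y k) ^ 2 = 2 * (∑ k, D1 n f x k * y k) ^ 2 / f x := by ring
    _ ≤ ∑ k, ∑ l, D2 n f x k l * y k * y l + ∑ k, D1 n f x k * (2 * (y k ^ 2 / x k)) :=
      (div_le_iff₀' hfx).2 hmain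
    _ = _ := by
      rw [Finset.mul_sum]
      congr! 2
      ring

end InverseConcave

theorem gradient_terms_nonneg_general (n : ℕ) [NeZero n] (f : (Fin n → ℝ) → ℝ)
    (hsmooth : ContDiffOn ℝ 2 f (posCone n))
    (hsym : ∀ σ : Equiv.Perm (Fin n), ∀ x ∈ posCone n, f (x ∘ σ) = f x)
    (hpos : ∀ x ∈ posCone n, 0 < f x)
    (hinvconc : ConcaveOn ℝ (posCone n) (dualF n f))
    (α : ℝ) (hα0 : -1 ≤ α) (hα1 : α ≤ 1)
    (κ : Fin n → ℝ) (hκ : κ ∈ posCone n) (hκmono : StrictMono κ)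
    (T : Matrix (Fin n) (Fin n) ℝ) (hT : T.IsSymm)
    (hnull : ∑ l, D1 n f κ l * T l l = (f κ / κ 0) * T 0 0) :
    0 ≤ (∑ k, ∑ l, D2 n f κ k l * T k k * T l l)
        + 2 * ∑ k, ∑ l ∈ Finset.univ.filter (fun l => l < k),
            ((D1 n f κ k - D1 n f κ l) / (κ k - κ l)) * T k l ^ 2
        - (α + 1) * (f κ)⁻¹ * (∑ k, D1 n f κ k * T k k) ^ 2
        + (α + 1) * (κ 0)⁻¹ * ∑ k, D1 n f κ k * T 0 k ^ 2
        + 2 * ∑ k, ∑ l ∈ Finset.univ.filter (fun l => l ≠ 0),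
            (D1 n f κ k / (κ l - κ 0)) * T k l ^ 2 := by
  have hdiff : DifferentiableAt ℝ f κ :=
    (hsmooth.contDiffAt ((isOpen_posCone n).mem_nhds hκ)).differentiableAt two_ne_zero
  have hbound := D1_mul_self_mem_Icc hinvconc hκ hdiff hpos
  have hD1 : ∀ k, 0 ≤ D1 n f κ k := fun k => nonneg_of_mul_nonneg_left (hbound k).1 (hκ k)
  have hκ₀ : 0 < κ 0 := hκ 0
  have hhess := two_mul_inv_mul_sum_D1_sq_le hinvconc hκ hpos hsmooth fun k => T k k
  have hgrad := sum_div_mul_sq_le_divided_differences_add_gradient hκ hκmono hD1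
    (fun _ _ hlk => D1_mul_sq_le_D1_mul_sq hinvconc hκ hdiff (hpos κ hκ).ne' hsym (hκmono hlk)) hT
  have hrow : (α + 1) * (κ 0)⁻¹ * (D1 n f κ 0 * T 0 0 ^ 2)
      ≤ (α + 1) * (κ 0)⁻¹ * ∑ k, D1 n f κ k * T 0 k ^ 2 :=
    mul_le_mul_of_nonneg_left
      (Finset.single_le_sum (f := fun k => D1 n f κ k * T 0 k ^ 2)
        (fun k _ => mul_nonneg (hD1 k) (sq_nonneg _)) (Finset.mem_univ 0))
      (mul_nonneg (by linarith) (inv_pos.2 hκ₀).le)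
  have hconstraint : (f κ)⁻¹ * (∑ k, D1 n f κ k * T k k) ^ 2 - D1 n f κ 0 / κ 0 * T 0 0 ^ 2
      = (f κ - D1 n f κ 0 * κ 0) * (T 0 0 / κ 0) ^ 2 := by
    rw [hnull]
    field_simp
  have hrest : 0 ≤ (1 - α) * ((f κ - D1 n f κ 0 * κ 0) * (T 0 0 / κ 0) ^ 2) :=
    mul_nonneg (sub_nonneg.2 hα1) (mul_nonneg (sub_nonneg.2 (hbound 0).2) (sq_nonneg _))
  rw [← hconstraint] at hrest
  linear_combination hhess + 2 * hgrad + hrow + hrest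

/-- the gradient-term inequality `Q₁ ≥ 0` at a null point of the pinching
tensor: for inverse concave `f`, `0 < α ≤ 1`, `κ ∈ Γ₊` with strictly increasing coordinates,
and any symmetric matrix `T` with `Σ_l ḟ^l T_{ll} = (F/κ₁) T_{11}`, one has
`Σ_{k,l} f̈^{kl} T_{kk} T_{ll} + 2 Σ_{k>l} ((ḟ^k−ḟ^l)/(κ_k−κ_l)) T_{kl}²
 − (α+1) F⁻¹ (Σ_k ḟ^k T_{kk})² + (α+1) κ₁⁻¹ Σ_k ḟ^k T_{1k}²
 + 2 Σ_k Σ_{l≥2} (ḟ^k/(κ_l−κ₁)) T_{kl}² ≥ 0`. -/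
theorem gradient_terms_nonneg (n : ℕ) [NeZero n] (hn : 2 ≤ n) (f : (Fin n → ℝ) → ℝ)
    (hsmooth : ContDiffOn ℝ (⊤ : ℕ∞) f (posCone n))
    (hsym : ∀ σ : Equiv.Perm (Fin n), ∀ x ∈ posCone n, f (x ∘ σ) = f x)
    (hpos : ∀ x ∈ posCone n, 0 < f x)
    (hmono : ∀ x ∈ posCone n, ∀ i, 0 < D1 n f x i)
    (hhom : ∀ k : ℝ, 0 < k → ∀ x ∈ posCone n, f (k • x) = k * f x)
    (hinvconc : ConcaveOn ℝ (posCone n) (dualF n f))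
    (α : ℝ) (hα0 : 0 < α) (hα1 : α ≤ 1)
    (κ : Fin n → ℝ) (hκ : κ ∈ posCone n) (hκmono : StrictMono κ)
    (T : Matrix (Fin n) (Fin n) ℝ) (hT : T.IsSymm)
    (hnull : ∑ l, D1 n f κ l * T l l = (f κ / κ 0) * T 0 0) :
    0 ≤ (∑ k, ∑ l, D2 n f κ k l * T k k * T l l)
        + 2 * ∑ k, ∑ l ∈ Finset.univ.filter (fun l => l < k),
            ((D1 n f κ k - D1 n f κ l) / (κ k - κ l)) * T k l ^ 2
        - (α + 1) * (f κ)⁻¹ * (∑ k, D1 n f κ k * T k k) ^ 2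
        + (α + 1) * (κ 0)⁻¹ * ∑ k, D1 n f κ k * T 0 k ^ 2
        + 2 * ∑ k, ∑ l ∈ Finset.univ.filter (fun l => l ≠ 0),
            (D1 n f κ k / (κ l - κ 0)) * T k l ^ 2 :=
  gradient_terms_nonneg_general n f (hsmooth.of_le (by norm_cast)) hsym hpos hinvconc
    α (by linarith) hα1 κ hκ hκmono T hT hnull
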